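/- Given the setup (Ω, 𝓕, P, F, W), if I and J are both stochastic integral mappings from L² to C, then for every b ∈ L² and every t ≥ 0, I(b)(t) = J(b)(t) with probability one. -/

import Mathlib

/-!
Two stochastic integral mappings agree almost surely on a simple process whose grid ends by time
`u`, since both are given there by the same elementary sum. Both are continuous for convergence in
probability, whose limits are almost surely unique, so it suffices to approximate each `b ∈ L²` on
`(0, u]`, in probability, by simple `H²` processes with grids inside `[0, u]`
(`exists_simple_approx`).

Truncating `b` to `[-N, N]` and to times in `(0, u]` costs little in probability, by dominated
convergence. The truncated process `B` is bounded, jointly measurable and adapted, but it need not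
be progressively measurable, so it is not smoothed in time; it is sampled along a suitably shifted
grid instead. For a mesh `δ` and a shift `s ∈ (0, δ)`, let the simple process take the value
`B (s + kδ)` on `(s + kδ, s + (k + 1)δ]`. The average over `s` of its mean square error is at most
`(1/δ) ∫₀^δ E ∫ (B (x + r) - B x)² dx dr`, which tends to `0` with `δ` because translations act
continuously on `L²(ℝ)`. Hence for small `δ` some shift `s` gives a small error
(`exists_shift`, `exists_simple_approx_of_bounded`).
-/

open MeasureTheory Filter Set

variable {Ω : Type*} {mΩ : MeasurableSpace Ω}

/-- The filtration is augmented: each `F t` contains all `P`-null sets. -/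
def AugmentedFiltration (P : Measure Ω) (F : Filtration ℝ mΩ) : Prop :=
  ∀ t : ℝ, ∀ s : Set Ω, MeasurableSet s → P s = 0 → MeasurableSet[F t] s

/-- `W` is a standard Wiener process with respect to the filtration `F` under `P`. -/
def IsWienerProcess (P : Measure Ω) (F : Filtration ℝ mΩ) (W : ℝ → Ω → ℝ) : Prop :=
  (∀ ω, Continuous fun t => W t ω) ∧
  (∀ ω, W 0 ω = 0) ∧
  Adapted F W ∧
  ∀ s t : ℝ, 0 ≤ s → s ≤ t →
    ProbabilityTheory.Indep
      (MeasurableSpace.comap (fun ω => W t ω - W s ω) inferInstance) (F s) P ∧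
    Measure.map (fun ω => W t ω - W s ω) P
      = ProbabilityTheory.gaussianReal 0 (Real.toNNReal (t - s))

/-- `b` is a simple process with grid `0 = t 0 < t 1 < ⋯ < t n`. -/
def IsSimpleWith (F : Filtration ℝ mΩ) (b : ℝ → Ω → ℝ) (n : ℕ) (t : ℕ → ℝ) : Prop :=
  t 0 = 0 ∧ (∀ i < n, t i < t (i + 1)) ∧
  Measurable[F 0] (b 0) ∧
  (∀ i < n, Measurable[F (t i)] (b (t (i + 1)))) ∧
  ∀ s ω, b s ω =
    Set.indicator ({0} : Set ℝ) (fun _ => b 0 ω) s +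
      ∑ i ∈ Finset.range n,
        Set.indicator (Set.Ioc (t i) (t (i + 1))) (fun _ => b (t (i + 1)) ω) s

/-- `b` is a simple process. -/
def IsSimpleProcess (F : Filtration ℝ mΩ) (b : ℝ → Ω → ℝ) : Prop :=
  ∃ n t, IsSimpleWith F b n t

/-- `b ∈ L²`: measurable, adapted, and pathwise locally square integrable a.s. -/
def MemL2 (P : Measure Ω) (F : Filtration ℝ mΩ) (b : ℝ → Ω → ℝ) : Prop :=
  Measurable (Function.uncurry b) ∧ Adapted F b ∧
  ∀ t : ℝ, 0 ≤ t →
    ∀ᵐ ω ∂P, (∫⁻ s in Set.Ioc (0 : ℝ) t, ENNReal.ofReal ((b s ω) ^ 2)) < ⊤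

/-- `b ∈ H²`: measurable, adapted, locally square integrable in expectation. -/
def MemH2 (P : Measure Ω) (F : Filtration ℝ mΩ) (b : ℝ → Ω → ℝ) : Prop :=
  Measurable (Function.uncurry b) ∧ Adapted F b ∧
  ∀ t : ℝ, 0 ≤ t →
    (∫⁻ ω, ∫⁻ s in Set.Ioc (0 : ℝ) t, ENNReal.ofReal ((b s ω) ^ 2) ∂volume ∂P) < ⊤

/-- Elementary stochastic integral `∑ b(tᵢ)(W(tᵢ) − W(tᵢ₋₁))` of a simple process. -/
def ElemInt (W : ℝ → Ω → ℝ) (b : ℝ → Ω → ℝ) (n : ℕ) (t : ℕ → ℝ) (ω : Ω) : ℝ :=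
  ∑ i ∈ Finset.range n, b (t (i + 1)) ω * (W (t (i + 1)) ω - W (t i) ω)

/-- `I` is a stochastic integral mapping: it sends `L²` into the adapted continuous
processes, computes integrals of simple processes by the elementary formula, and is
continuous with respect to convergence in probability of the time integrals. -/
def IsStochasticIntegralMap (P : Measure Ω) (F : Filtration ℝ mΩ) (W : ℝ → Ω → ℝ)
    (I : (ℝ → Ω → ℝ) → ℝ → Ω → ℝ) : Prop :=
  (∀ b, MemL2 P F b → Adapted F (I b) ∧ ∀ ω, Continuous fun s => I b s ω) ∧
  (∀ b n t, MemL2 P F b → IsSimpleWith F b n t → ∀ u : ℝ, t n ≤ u →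
      ∀ᵐ ω ∂P, I b u ω = ElemInt W b n t ω) ∧
  (∀ u : ℝ, 0 ≤ u → ∀ b, MemL2 P F b → ∀ bs : ℕ → ℝ → Ω → ℝ,
      (∀ k, IsSimpleProcess F (bs k) ∧ MemH2 P F (bs k)) →
      TendstoInMeasure P
        (fun k ω => ∫ s in Set.Ioc (0 : ℝ) u, (b s ω - bs k s ω) ^ 2) atTop
        (fun _ => (0 : ℝ)) →
      TendstoInMeasure P (fun k ω => I (bs k) u ω) atTop (fun ω => I b u ω))

open scoped Topology ENNReal

/-! ### Continuity of translations in mean square -/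

theorem tendsto_lintegral_sq_translate {f : ℝ → ℝ} (hf : MemLp f 2 volume) :
    Tendsto (fun r : ℝ => ∫⁻ x, ENNReal.ofReal ((f (x + r) - f x) ^ 2)) (𝓝 0) (𝓝 0) := by
  have : Fact ((2 : ℝ≥0∞) ≠ ∞) := ⟨by simp⟩
  have hcont : Continuous fun r : ℝ => DomAddAct.mk r +ᵥ hf.toLp f := by
    have h1 : Continuous fun r : ℝ => DomAddAct.mk r := DomAddAct.continuous_mk
    exact h1.vadd continuous_const
  have h0 : Tendsto (fun r : ℝ => edist (DomAddAct.mk r +ᵥ hf.toLp f) (hf.toLp f) ^ 2) (𝓝 0) (𝓝 0) := by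
    have h2 : Continuous fun r : ℝ => edist (DomAddAct.mk r +ᵥ hf.toLp f) (hf.toLp f) ^ 2 :=
      (ENNReal.continuous_pow 2).comp (hcont.edist continuous_const)
    have := h2.tendsto 0
    simpa using this
  refine h0.congr fun r => ?_
  rw [DomAddAct.mk_vadd_toLp, Lp.edist_toLp_toLp,
    eLpNorm_eq_lintegral_rpow_enorm_toReal (by simp) (by simp)]
  simp only [ENNReal.toReal_ofNat, one_div, ENNReal.rpow_ofNat]
  rw [← ENNReal.rpow_natCast, ← ENNReal.rpow_mul]
  norm_num
  refine lintegral_congr fun x => ?_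
  rw [Real.enorm_eq_ofReal_abs, ← ENNReal.ofReal_pow (abs_nonneg _), sq_abs, add_comm]

theorem ofReal_sub_sq_le (x y z : ℝ) :
    ENNReal.ofReal ((x - z) ^ 2) ≤
      2 * ENNReal.ofReal ((x - y) ^ 2) + 2 * ENNReal.ofReal ((y - z) ^ 2) := by
  have h2 : (2 : ℝ≥0∞) = ENNReal.ofReal 2 := by simp
  rw [h2, ← ENNReal.ofReal_mul (by norm_num), ← ENNReal.ofReal_mul (by norm_num),
    ← ENNReal.ofReal_add (by positivity) (by positivity)]
  exact ENNReal.ofReal_le_ofReal (by nlinarith [sq_nonneg (x - y - (y - z))])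

theorem ofReal_sq_le_of_abs_le {x C : ℝ} (h : |x| ≤ C) :
    ENNReal.ofReal (x ^ 2) ≤ ENNReal.ofReal (C ^ 2) :=
  ENNReal.ofReal_le_ofReal (sq_le_sq' (by linarith [neg_le_of_abs_le h]) (le_of_abs_le h))

/-- Translations are continuous at `0` for the norm of `L²(ℝ × Ω)`: pathwise this is continuity of
translations in `L²(ℝ)`, and the bounds on `B` allow dominated convergence in `ω`. -/
theorem tendsto_lintegral_lintegral_sq_translate (P : Measure Ω) [IsProbabilityMeasure P]
    {B : ℝ → Ω → ℝ} (hB : Measurable (Function.uncurry B)) {C u : ℝ}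
    (hC : ∀ s ω, |B s ω| ≤ C) (hsupp : ∀ s ω, s ∉ Ioc 0 u → B s ω = 0) :
    Tendsto (fun r : ℝ => ∫⁻ ω, ∫⁻ x, ENNReal.ofReal ((B (x + r) ω - B x ω) ^ 2) ∂volume ∂P)
      (𝓝 0) (𝓝 0) := by
  have hsec : ∀ ω, Measurable fun s => B s ω := fun ω => hB.comp measurable_prodMk_right
  -- the total mass of each path is at most `C² u`
  have hmass : ∀ ω, ∫⁻ x, ENNReal.ofReal (B x ω ^ 2) ≤
      ENNReal.ofReal (C ^ 2) * volume (Ioc (0 : ℝ) u) := by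
    intro ω
    rw [← setLIntegral_const, ← lintegral_indicator measurableSet_Ioc]
    refine lintegral_mono fun x => ?_
    by_cases hx : x ∈ Ioc 0 u
    · simpa [hx] using ofReal_sq_le_of_abs_le (hC x ω)
    · simp [hx, hsupp x ω hx]
  have hlim : ∀ ω, Tendsto
      (fun r : ℝ => ∫⁻ x, ENNReal.ofReal ((B (x + r) ω - B x ω) ^ 2)) (𝓝 0) (𝓝 0) := by
    intro ω
    have hmem : MemLp (fun s => B s ω) 2 volume := by
      refine ⟨(hsec ω).aestronglyMeasurable, ?_⟩
      rw [eLpNorm_lt_top_iff_lintegral_rpow_enorm_lt_top (by simp) (by simp)]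
      refine lt_of_le_of_lt (le_of_eq ?_) ((hmass ω).trans_lt
        (ENNReal.mul_lt_top ENNReal.ofReal_lt_top measure_Ioc_lt_top))
      refine lintegral_congr fun x => ?_
      simp only [ENNReal.toReal_ofNat, ENNReal.rpow_ofNat]
      rw [Real.enorm_eq_ofReal_abs, ← ENNReal.ofReal_pow (abs_nonneg _), sq_abs]
    have h := tendsto_lintegral_sq_translate hmem
    exact h
  have key := tendsto_lintegral_filter_of_dominated_convergence (μ := P) (l := 𝓝 (0 : ℝ))
    (F := fun r ω => ∫⁻ x, ENNReal.ofReal ((B (x + r) ω - B x ω) ^ 2)) (f := fun _ => 0)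
    (fun _ => 4 * (ENNReal.ofReal (C ^ 2) * volume (Ioc (0 : ℝ) u)))
    (Eventually.of_forall fun r => ?_) (Eventually.of_forall fun r => ae_of_all _ fun ω => ?_)
    ?_ (ae_of_all _ hlim)
  · simpa using key
  · refine Measurable.lintegral_prod_right'
      (f := fun p : Ω × ℝ => ENNReal.ofReal ((B (p.2 + r) p.1 - B p.2 p.1) ^ 2)) ?_
    have h1 : Measurable fun p : Ω × ℝ => B (p.2 + r) p.1 :=
      hB.comp ((measurable_snd.add_const r).prodMk measurable_fst)
    have h2 : Measurable fun p : Ω × ℝ => B p.2 p.1 :=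
      hB.comp (measurable_snd.prodMk measurable_fst)
    fun_prop
  · calc ∫⁻ x, ENNReal.ofReal ((B (x + r) ω - B x ω) ^ 2)
        ≤ ∫⁻ x, (2 * ENNReal.ofReal (B (x + r) ω ^ 2) + 2 * ENNReal.ofReal (B x ω ^ 2)) := by
          refine lintegral_mono fun x => ?_
          simpa using ofReal_sub_sq_le (B (x + r) ω) 0 (B x ω)
      _ = 2 * (∫⁻ x, ENNReal.ofReal (B (x + r) ω ^ 2)) + 2 * ∫⁻ x, ENNReal.ofReal (B x ω ^ 2) := by
          have := hsec ω
          rw [lintegral_add_right _ (by fun_prop), lintegral_const_mul _ (by fun_prop),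
            lintegral_const_mul _ (by fun_prop)]
      _ = 4 * ∫⁻ x, ENNReal.ofReal (B x ω ^ 2) := by
          rw [lintegral_add_right_eq_self (fun x => ENNReal.ofReal (B x ω ^ 2)) r, ← add_mul]
          norm_num
      _ ≤ _ := by gcongr; exact hmass ω
  · simp only [lintegral_const, measure_univ, mul_one]
    exact (ENNReal.mul_lt_top (by simp)
      (ENNReal.mul_lt_top ENNReal.ofReal_lt_top measure_Ioc_lt_top)).ne

/-! ### Simple processes obtained by sampling -/

/-- The process `B` sampled along the grid `t`: on `(t i, t (i + 1)]`, for `i < n`, it has the value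
of `B` at the left endpoint `t i`, and it vanishes elsewhere. -/
noncomputable def gridProc (B : ℝ → Ω → ℝ) (n : ℕ) (t : ℕ → ℝ) (s : ℝ) (ω : Ω) : ℝ :=
  ∑ i ∈ Finset.range n, Set.indicator (Set.Ioc (t i) (t (i + 1))) (fun _ => B (t i) ω) s

theorem gridProc_of_mem (B : ℝ → Ω → ℝ) {n : ℕ} {t : ℕ → ℝ} (ht : StrictMono t) {i : ℕ}
    (hi : i < n) {s : ℝ} (hs : s ∈ Ioc (t i) (t (i + 1))) (ω : Ω) :
    gridProc B n t s ω = B (t i) ω := by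
  unfold gridProc
  rw [Finset.sum_eq_single i, indicator_of_mem hs]
  · intro j _ hj
    refine indicator_of_notMem (fun hs' => ?_) _
    rcases lt_or_gt_of_ne hj with h | h
    · have := ht.monotone (show j + 1 ≤ i from h)
      linarith [hs.1, hs'.2]
    · have := ht.monotone (show i + 1 ≤ j from h)
      linarith [hs.2, hs'.1]
  · intro h
    exact absurd (Finset.mem_range.2 hi) h

theorem gridProc_of_notMem (B : ℝ → Ω → ℝ) {n : ℕ} {t : ℕ → ℝ} {s : ℝ}
    (hs : ∀ i < n, s ∉ Ioc (t i) (t (i + 1))) (ω : Ω) : gridProc B n t s ω = 0 :=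
  Finset.sum_eq_zero fun i hi => indicator_of_notMem (hs i (Finset.mem_range.1 hi)) _

theorem gridProc_isSimpleWith {F : Filtration ℝ mΩ} {B : ℝ → Ω → ℝ} (hB : Adapted F B)
    (n : ℕ) {t : ℕ → ℝ} (ht : StrictMono t) (h0 : t 0 = 0) :
    IsSimpleWith F (gridProc B n t) n t := by
  have hz : gridProc B n t 0 = fun _ => 0 := by
    funext ω
    refine gridProc_of_notMem B (fun i _ hi => ?_) ω
    have := ht.monotone (Nat.zero_le i)
    linarith [hi.1]
  have hr : ∀ i < n, gridProc B n t (t (i + 1)) = B (t i) := fun i hi => by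
    funext ω
    exact gridProc_of_mem B ht hi ⟨ht (Nat.lt_succ_self i), le_rfl⟩ ω
  refine ⟨h0, fun i _ => ht (Nat.lt_succ_self i), ?_, fun i hi => ?_, fun s ω => ?_⟩
  · rw [hz]; exact measurable_const
  · rw [hr i hi]; exact hB (t i)
  · rw [hz]
    simp only [indicator_zero, zero_add]
    refine Finset.sum_congr rfl fun i hi => ?_
    rw [hr i (Finset.mem_range.1 hi)]

theorem gridProc_memH2 (P : Measure Ω) [IsProbabilityMeasure P] {F : Filtration ℝ mΩ}
    {B : ℝ → Ω → ℝ} (hB : Adapted F B) {C : ℝ} (hC : ∀ s ω, |B s ω| ≤ C)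
    (n : ℕ) {t : ℕ → ℝ} (ht : StrictMono t) : MemH2 P F (gridProc B n t) := by
  refine ⟨?_, fun s => ?_, fun T _ => ?_⟩
  · change Measurable fun p : ℝ × Ω => ∑ i ∈ Finset.range n,
      Set.indicator (Set.Ioc (t i) (t (i + 1))) (fun _ => B (t i) p.2) p.1
    refine Finset.measurable_sum _ fun i _ => ?_
    have h1 : Measurable fun p : ℝ × Ω => B (t i) p.2 :=
      ((hB (t i)).mono (F.le _) le_rfl).comp measurable_snd
    exact h1.indicator (measurable_fst measurableSet_Ioc)
  · refine Finset.measurable_sum _ fun i _ => ?_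
    by_cases hs : s ∈ Ioc (t i) (t (i + 1))
    · simp only [indicator_of_mem hs]
      exact (hB (t i)).mono (F.mono hs.1.le) le_rfl
    · simp only [indicator_of_notMem hs]
      exact measurable_const
  · have hle : ∀ s ω, ENNReal.ofReal (gridProc B n t s ω ^ 2) ≤ ENNReal.ofReal (C ^ 2) := by
      intro s ω
      apply ofReal_sq_le_of_abs_le
      by_cases h : ∃ i < n, s ∈ Ioc (t i) (t (i + 1))
      · obtain ⟨i, hi, hs⟩ := h
        rw [gridProc_of_mem B ht hi hs]
        exact hC _ _
      · push Not at h
        rw [gridProc_of_notMem B h, abs_zero]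
        exact (abs_nonneg _).trans (hC 0 ω)
    calc (∫⁻ ω, ∫⁻ s in Ioc (0 : ℝ) T, ENNReal.ofReal (gridProc B n t s ω ^ 2) ∂volume ∂P)
        ≤ ∫⁻ _ω, ∫⁻ _s in Ioc (0 : ℝ) T, ENNReal.ofReal (C ^ 2) ∂volume ∂P :=
          lintegral_mono fun ω => lintegral_mono fun s => hle s ω
      _ < ⊤ := by
          simp only [lintegral_const, measure_univ, mul_one, Measure.restrict_apply, univ_inter,
            MeasurableSet.univ]
          exact ENNReal.mul_lt_top ENNReal.ofReal_lt_top measure_Ioc_lt_top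

theorem MemH2.memL2 {P : Measure Ω} [IsProbabilityMeasure P] {F : Filtration ℝ mΩ}
    {b : ℝ → Ω → ℝ} (hb : MemH2 P F b) : MemL2 P F b := by
  refine ⟨hb.1, hb.2.1, fun t ht => ?_⟩
  refine ae_lt_top ?_ (hb.2.2 t ht).ne
  refine Measurable.lintegral_prod_right'
      (f := fun p : Ω × ℝ => ENNReal.ofReal (b p.2 p.1 ^ 2)) ?_
  have h2 : Measurable fun p : Ω × ℝ => b p.2 p.1 :=
    hb.1.comp (measurable_snd.prodMk measurable_fst)
  exact (h2.pow_const 2).ennreal_ofReal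

/-! ### Choice of the shift of the grid -/

theorem setLIntegral_Ioc_shift (f : ℝ → ℝ≥0∞) (a b y : ℝ) :
    ∫⁻ r in Ioc a b, f (y + r) = ∫⁻ x in Ioc (y + a) (y + b), f x := by
  rw [← lintegral_indicator measurableSet_Ioc, ← lintegral_indicator measurableSet_Ioc,
    ← lintegral_add_left_eq_self (indicator (Ioc (y + a) (y + b)) f) y]
  refine lintegral_congr fun r => ?_
  simp [indicator]

theorem sum_setLIntegral_Ioc_eq (f : ℝ → ℝ≥0∞) {t : ℕ → ℝ} (ht : Monotone t) (m : ℕ) :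
    ∑ i ∈ Finset.range m, ∫⁻ x in Ioc (t i) (t (i + 1)), f x = ∫⁻ x in Ioc (t 0) (t m), f x := by
  induction m with
  | zero => simp
  | succ m ih =>
    rw [Finset.sum_range_succ, ih,
      ← Ioc_union_Ioc_eq_Ioc (ht (Nat.zero_le m)) (ht (Nat.le_succ m)),
      lintegral_union measurableSet_Ioc (Ioc_disjoint_Ioc_of_le le_rfl)]

/-- Averaging argument: the mean over `s ∈ (0, δ)` of the sum below is at most
`δ⁻¹ ∫₀^δ ∫ h x r dx dr`, because the points `s + (k - 1)δ` run through disjoint intervals as `k`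
varies, so some `s` does at least as well as the mean. -/
theorem exists_shift {h : ℝ → ℝ → ℝ≥0∞} (hh : Measurable (Function.uncurry h)) {δ : ℝ}
    (hδ : 0 < δ) {η : ℝ≥0∞} (hη : ∀ r ∈ Ioc 0 δ, ∫⁻ x, h x r ≤ η) (m : ℕ) :
    ∃ s ∈ Ioo 0 δ, ∑ k ∈ Finset.range m, ∫⁻ r in Ioc 0 δ, h (s + ((k : ℝ) - 1) * δ) r ≤ η := by
  have hmk : ∀ k : ℕ, Measurable fun p : ℝ × ℝ => h (p.1 + ((k : ℝ) - 1) * δ) p.2 := fun k =>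
    hh.comp ((measurable_fst.add_const _).prodMk measurable_snd)
  have hmE : Measurable fun s : ℝ =>
      ∑ k ∈ Finset.range m, ∫⁻ r in Ioc 0 δ, h (s + ((k : ℝ) - 1) * δ) r :=
    Finset.measurable_sum _ fun k _ => (hmk k).lintegral_prod_right'
  have hvol : volume (Ioo 0 δ) = ENNReal.ofReal δ := by simp
  have hvol0 : volume (Ioo 0 δ) ≠ 0 := by simp [hvol, hδ]
  have hvolt : volume (Ioo 0 δ) ≠ ∞ := by simp [hvol]
  obtain ⟨s, hs, hle⟩ := exists_le_setLAverage hvol0 hvolt hmE.aemeasurable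
  refine ⟨s, hs, hle.trans ?_⟩
  rw [setLAverage_eq]
  refine ENNReal.div_le_of_le_mul ?_
  have hmono : Monotone fun k : ℕ => ((k : ℝ) - 1) * δ := fun i j hij => by
    have : (i : ℝ) ≤ j := by exact_mod_cast hij
    dsimp only
    gcongr
  calc ∫⁻ s in Ioo 0 δ, ∑ k ∈ Finset.range m, ∫⁻ r in Ioc 0 δ, h (s + ((k : ℝ) - 1) * δ) r
      ≤ ∫⁻ s in Ioc 0 δ, ∑ k ∈ Finset.range m, ∫⁻ r in Ioc 0 δ, h (s + ((k : ℝ) - 1) * δ) r :=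
        lintegral_mono_set Ioo_subset_Ioc_self
    _ = ∑ k ∈ Finset.range m, ∫⁻ r in Ioc 0 δ, ∫⁻ s in Ioc 0 δ, h (s + ((k : ℝ) - 1) * δ) r := by
        rw [lintegral_finsetSum _ fun k _ => (hmk k).lintegral_prod_right']
        refine Finset.sum_congr rfl fun k _ => ?_
        exact lintegral_lintegral_swap (hmk k).aemeasurable
    _ = ∫⁻ r in Ioc 0 δ, ∑ k ∈ Finset.range m, ∫⁻ s in Ioc 0 δ, h (s + ((k : ℝ) - 1) * δ) r := by
        rw [lintegral_finsetSum _ fun k _ => (hmk k).lintegral_prod_left']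
    _ ≤ ∫⁻ r in Ioc 0 δ, η := by
        refine setLIntegral_mono measurable_const fun r hr => ?_
        refine le_trans ?_ (hη r hr)
        have h1 : ∀ k ∈ Finset.range m, ∫⁻ s in Ioc 0 δ, h (s + ((k : ℝ) - 1) * δ) r =
            ∫⁻ x in Ioc (((k : ℝ) - 1) * δ) ((((k + 1 : ℕ) : ℝ) - 1) * δ), h x r := by
          intro k _
          have := setLIntegral_Ioc_shift (fun x => h x r) 0 δ (((k : ℝ) - 1) * δ)
          simp only [add_comm _ (((k : ℝ) - 1) * δ)]
          rw [this]
          push_cast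
          congr 3 <;> ring
        rw [Finset.sum_congr rfl h1, sum_setLIntegral_Ioc_eq (fun x => h x r) hmono m]
        exact setLIntegral_le_lintegral _ _
    _ = η * volume (Ioo 0 δ) := by simp

/-- The grid `0 < s < s + δ < ⋯ < s + (n - 1)δ < u`, with `n + 2` points numbered from `0`. The
points with number greater than `n + 1` only serve to make the sequence strictly increasing. -/
noncomputable def gridTime (u δ s : ℝ) (n i : ℕ) : ℝ :=
  if i = 0 then 0 else if i ≤ n then s + ((i : ℝ) - 1) * δ else u + ((i : ℝ) - (n + 1))

theorem gridTime_strictMono {u δ s : ℝ} {n : ℕ} (hn : 0 < n) (hs : s ∈ Ioo 0 δ)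
    (hu : u = n * δ) : StrictMono (gridTime u δ s n) := by
  refine strictMono_nat_of_lt_succ fun i => ?_
  have hδ : 0 < δ := hs.1.trans hs.2
  unfold gridTime
  rcases Nat.eq_zero_or_pos i with rfl | hi
  · have : 1 ≤ n := hn
    simp [this, hs.1]
  rw [if_neg hi.ne', if_neg (Nat.succ_ne_zero i)]
  rcases lt_trichotomy i n with h | rfl | h
  · rw [if_pos h.le, if_pos (show i + 1 ≤ n from h)]
    push_cast
    nlinarith
  · rw [if_pos le_rfl, if_neg (by omega)]
    push_cast
    nlinarith [hs.2]
  · rw [if_neg (by omega), if_neg (by omega)]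
    push_cast
    linarith

/-- The first interval `(0, s]` of the grid is treated as part of `(s - δ, s]`, where the sampled value
is `B (s - δ) = 0 = B 0`, and the last one, which ends at `u`, as part of
`(s + (n - 1)δ, s + nδ]`. -/
theorem lintegral_sub_gridProc_le {B : ℝ → Ω → ℝ} {u δ s : ℝ}
    (hsupp : ∀ s ω, s ∉ Ioc 0 u → B s ω = 0) {n : ℕ} (hn : 0 < n) (hs : s ∈ Ioo 0 δ)
    (hu : u = n * δ) (ω : Ω) :
    ∫⁻ x in Ioc 0 u, ENNReal.ofReal ((B x ω - gridProc B (n + 1) (gridTime u δ s n) x ω) ^ 2) ≤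
      ∑ k ∈ Finset.range (n + 1), ∫⁻ r in Ioc 0 δ,
        ENNReal.ofReal ((B (s + ((k : ℝ) - 1) * δ + r) ω - B (s + ((k : ℝ) - 1) * δ) ω) ^ 2) := by
  have hδ : 0 < δ := hs.1.trans hs.2
  have ht := gridTime_strictMono hn hs hu
  set t := gridTime u δ s n with ht_def
  have h0 : t 0 = 0 := by simp [ht_def, gridTime]
  have hlast : t (n + 1) = u := by simp [ht_def, gridTime]
  have hsplit := sum_setLIntegral_Ioc_eq
    (fun x => ENNReal.ofReal ((B x ω - gridProc B (n + 1) t x ω) ^ 2)) ht.monotone (n + 1)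
  rw [h0, hlast] at hsplit
  refine hsplit.symm.le.trans (Finset.sum_le_sum fun k hk => ?_)
  have hk' : k < n + 1 := Finset.mem_range.1 hk
  set y := s + ((k : ℝ) - 1) * δ with hy
  have hval : B (t k) ω = B y ω := by
    rcases Nat.eq_zero_or_pos k with rfl | hk0
    · rw [hsupp (t 0) ω (by simp [h0]), hsupp y ω]
      intro hmem
      have := hmem.1
      simp only [hy] at this
      push_cast at this
      linarith [hs.2]
    · have : t k = y := by
        simp only [ht_def, gridTime]
        rw [if_neg hk0.ne', if_pos (by omega)]
      rw [this]
  have hsub : Ioc (t k) (t (k + 1)) ⊆ Ioc (y + 0) (y + δ) := by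
    refine Ioc_subset_Ioc ?_ ?_
    · rcases Nat.eq_zero_or_pos k with rfl | hk0
      · rw [h0, hy]; push_cast; linarith [hs.2]
      · simp only [ht_def, gridTime]
        rw [if_neg hk0.ne', if_pos (by omega), add_zero]
    · rcases Nat.lt_or_ge k n with h | h
      · simp only [ht_def, gridTime]
        rw [if_neg (Nat.succ_ne_zero k), if_pos (show k + 1 ≤ n from h), hy]
        push_cast; linarith
      · obtain rfl : k = n := by omega
        rw [hlast, hy, hu]; linarith [hs.1]
  calc ∫⁻ x in Ioc (t k) (t (k + 1)), ENNReal.ofReal ((B x ω - gridProc B (n + 1) t x ω) ^ 2)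
      = ∫⁻ x in Ioc (t k) (t (k + 1)), ENNReal.ofReal ((B x ω - B y ω) ^ 2) := by
        refine setLIntegral_congr_fun measurableSet_Ioc fun x hx => ?_
        simp only [gridProc_of_mem B ht hk' hx, hval]
    _ ≤ ∫⁻ x in Ioc (y + 0) (y + δ), ENNReal.ofReal ((B x ω - B y ω) ^ 2) :=
        lintegral_mono_set hsub
    _ = ∫⁻ r in Ioc 0 δ, ENNReal.ofReal ((B (y + r) ω - B y ω) ^ 2) :=
        (setLIntegral_Ioc_shift (fun x => ENNReal.ofReal ((B x ω - B y ω) ^ 2)) 0 δ y).symm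

theorem exists_simple_approx_of_bounded (P : Measure Ω) [IsProbabilityMeasure P]
    {F : Filtration ℝ mΩ} {B : ℝ → Ω → ℝ} (hB : Measurable (Function.uncurry B))
    (hBa : Adapted F B) {C u : ℝ} (hu : 0 < u)
    (hC : ∀ s ω, |B s ω| ≤ C) (hsupp : ∀ s ω, s ∉ Ioc 0 u → B s ω = 0)
    {η : ℝ≥0∞} (hη : 0 < η) :
    ∃ c n t, IsSimpleWith F c n t ∧ t n ≤ u ∧ MemH2 P F c ∧
      ∫⁻ ω, ∫⁻ s in Ioc 0 u, ENNReal.ofReal ((B s ω - c s ω) ^ 2) ∂volume ∂P ≤ η := by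
  have hmod := (ENNReal.tendsto_nhds_zero.1
    (tendsto_lintegral_lintegral_sq_translate P hB hC hsupp)) η hη
  obtain ⟨δ₀, hδ₀, hmod⟩ := Metric.eventually_nhds_iff.1 hmod
  obtain ⟨n, hn⟩ := exists_nat_gt (u / δ₀)
  have hn0 : (0 : ℝ) < n := (div_pos hu hδ₀).trans hn
  have hnpos : 0 < n := by exact_mod_cast hn0
  obtain ⟨δ, hδ_def⟩ : ∃ δ, δ = u / n := ⟨_, rfl⟩
  have hδ : 0 < δ := hδ_def ▸ div_pos hu hn0
  have hδlt : δ < δ₀ := by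
    rw [hδ_def, div_lt_iff₀ hn0]
    rwa [div_lt_iff₀ hδ₀, mul_comm] at hn
  have hunδ : u = n * δ := by rw [hδ_def]; field_simp
  have hm3 : Measurable fun p : (ℝ × ℝ) × Ω =>
      ENNReal.ofReal ((B (p.1.1 + p.1.2) p.2 - B p.1.1 p.2) ^ 2) := by
    have h1 : Measurable fun p : (ℝ × ℝ) × Ω => B (p.1.1 + p.1.2) p.2 :=
      hB.comp (((measurable_fst.comp measurable_fst).add
        (measurable_snd.comp measurable_fst)).prodMk measurable_snd)
    have h2 : Measurable fun p : (ℝ × ℝ) × Ω => B p.1.1 p.2 :=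
      hB.comp ((measurable_fst.comp measurable_fst).prodMk measurable_snd)
    exact ((h1.sub h2).pow_const 2).ennreal_ofReal
  let h : ℝ → ℝ → ℝ≥0∞ := fun x r => ∫⁻ ω, ENNReal.ofReal ((B (x + r) ω - B x ω) ^ 2) ∂P
  have hh : Measurable (Function.uncurry h) := hm3.lintegral_prod_right'
  have hhη : ∀ r ∈ Ioc 0 δ, ∫⁻ x, h x r ≤ η := by
    intro r hr
    have hr' : dist r 0 < δ₀ := by
      rw [Real.dist_eq, sub_zero, abs_of_pos hr.1]
      exact hr.2.trans_lt hδlt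
    refine le_trans (le_of_eq ?_) (hmod hr')
    refine lintegral_lintegral_swap (f := fun x ω => ENNReal.ofReal ((B (x + r) ω - B x ω) ^ 2)) ?_
    exact (hm3.comp ((measurable_fst.prodMk measurable_const).prodMk measurable_snd)).aemeasurable
  obtain ⟨s, hs, hle⟩ := exists_shift hh hδ hhη (n + 1)
  have ht := gridTime_strictMono hnpos hs hunδ
  refine ⟨gridProc B (n + 1) (gridTime u δ s n), n + 1, gridTime u δ s n,
    gridProc_isSimpleWith hBa _ ht (by simp [gridTime]), by simp [gridTime],
    gridProc_memH2 P hBa hC _ ht, le_trans ?_ hle⟩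
  have hmk : ∀ y : ℝ, Measurable fun p : Ω × ℝ =>
      ENNReal.ofReal ((B (y + p.2) p.1 - B y p.1) ^ 2) := fun y =>
    hm3.comp ((measurable_const.prodMk measurable_snd).prodMk measurable_fst)
  calc ∫⁻ ω, ∫⁻ x in Ioc 0 u,
        ENNReal.ofReal ((B x ω - gridProc B (n + 1) (gridTime u δ s n) x ω) ^ 2) ∂volume ∂P
      ≤ ∫⁻ ω, ∑ k ∈ Finset.range (n + 1), ∫⁻ r in Ioc 0 δ, ENNReal.ofReal
          ((B (s + ((k : ℝ) - 1) * δ + r) ω - B (s + ((k : ℝ) - 1) * δ) ω) ^ 2) ∂volume ∂P :=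
        lintegral_mono fun ω => lintegral_sub_gridProc_le hsupp hnpos hs hunδ ω
    _ = ∑ k ∈ Finset.range (n + 1), ∫⁻ r in Ioc 0 δ, h (s + ((k : ℝ) - 1) * δ) r := by
        rw [lintegral_finsetSum _ fun k _ => (hmk _).lintegral_prod_right']
        refine Finset.sum_congr rfl fun k _ => ?_
        exact lintegral_lintegral_swap (hmk (s + ((k : ℝ) - 1) * δ)).aemeasurable

/-! ### Truncation -/

/-- The process `b` with values clamped to `[-N, N]`, set to `0` outside the times `(0, u]`. -/
noncomputable def clampProc (b : ℝ → Ω → ℝ) (u : ℝ) (N : ℕ) (s : ℝ) (ω : Ω) : ℝ :=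
  (Ioc 0 u).indicator (fun s => max (-(N : ℝ)) (min (N : ℝ) (b s ω))) s

theorem abs_clampProc_le (b : ℝ → Ω → ℝ) (u : ℝ) (N : ℕ) (s : ℝ) (ω : Ω) :
    |clampProc b u N s ω| ≤ N := by
  have hN : (0 : ℝ) ≤ N := Nat.cast_nonneg N
  unfold clampProc
  by_cases hs : s ∈ Ioc 0 u
  · rw [indicator_of_mem hs, abs_le]
    exact ⟨le_max_left _ _, max_le (by linarith) (min_le_left _ _)⟩
  · rw [indicator_of_notMem hs, abs_zero]; exact hN

theorem measurable_clampProc {b : ℝ → Ω → ℝ} (hb : Measurable (Function.uncurry b)) (u : ℝ)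
    (N : ℕ) : Measurable (Function.uncurry (clampProc b u N)) := by
  have h1 : Measurable fun p : ℝ × Ω => max (-(N : ℝ)) (min (N : ℝ) (b p.1 p.2)) :=
    measurable_const.max (measurable_const.min hb)
  exact h1.indicator (measurable_fst measurableSet_Ioc)

theorem adapted_clampProc {F : Filtration ℝ mΩ} {b : ℝ → Ω → ℝ} (hb : Adapted F b) (u : ℝ)
    (N : ℕ) : Adapted F (clampProc b u N) := by
  intro s
  unfold clampProc
  by_cases hs : s ∈ Ioc 0 u
  · simp only [indicator_of_mem hs]
    exact measurable_const.max (measurable_const.min (hb s))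
  · simp only [indicator_of_notMem hs]
    exact measurable_const

theorem tendsto_lintegral_sub_clampProc {b : ℝ → Ω → ℝ} (hb : Measurable (Function.uncurry b))
    {u : ℝ} {ω : Ω} (hω : (∫⁻ s in Ioc (0 : ℝ) u, ENNReal.ofReal ((b s ω) ^ 2)) < ⊤) :
    Tendsto (fun N : ℕ => ∫⁻ s in Ioc 0 u, ENNReal.ofReal ((b s ω - clampProc b u N s ω) ^ 2))
      atTop (𝓝 0) := by
  have key := tendsto_lintegral_filter_of_dominated_convergence
    (μ := volume.restrict (Ioc 0 u)) (l := atTop)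
    (F := fun (N : ℕ) s => ENNReal.ofReal ((b s ω - clampProc b u N s ω) ^ 2)) (f := fun _ => 0)
    (fun s => ENNReal.ofReal ((b s ω) ^ 2))
    (Eventually.of_forall fun N => ?_) (Eventually.of_forall fun N => ?_) hω.ne ?_
  · simpa using key
  · have h1 : Measurable fun s => b s ω := hb.comp measurable_prodMk_right
    have h2 : Measurable fun s => clampProc b u N s ω :=
      (measurable_clampProc hb u N).comp measurable_prodMk_right
    exact ((h1.sub h2).pow_const 2).ennreal_ofReal
  · filter_upwards [ae_restrict_mem measurableSet_Ioc] with s hs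
    refine ENNReal.ofReal_le_ofReal (sq_le_sq.2 ?_)
    have hN : (0 : ℝ) ≤ N := Nat.cast_nonneg N
    rw [clampProc, indicator_of_mem hs]
    rcases le_total 0 (b s ω) with h | h
    · rw [max_eq_right (by rw [le_min_iff]; constructor <;> linarith), abs_of_nonneg h,
        abs_of_nonneg (by linarith [min_le_right (N : ℝ) (b s ω)])]
      have : 0 ≤ min (N : ℝ) (b s ω) := le_min hN h
      linarith
    · rw [min_eq_right (by linarith), abs_of_nonpos h,
        abs_of_nonpos (by linarith [le_max_right (-(N : ℝ)) (b s ω)])]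
      have : max (-(N : ℝ)) (b s ω) ≤ 0 := max_le (by linarith) h
      linarith
  · filter_upwards [ae_restrict_mem measurableSet_Ioc] with s hs
    obtain ⟨M, hM⟩ := exists_nat_ge |b s ω|
    refine tendsto_const_nhds.congr' ?_
    filter_upwards [eventually_ge_atTop M] with N hN
    have hN' : (M : ℝ) ≤ N := by exact_mod_cast hN
    obtain ⟨h1, h2⟩ := abs_le.1 (hM.trans hN')
    rw [clampProc, indicator_of_mem hs, min_eq_right h2, max_eq_right h1]
    simp

/-- Density of simple processes: each `b ∈ L²` is approximated on `(0, u]`, in probability, by simple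
`H²` processes whose grids lie in `[0, u]`. -/
theorem exists_simple_approx (P : Measure Ω) [IsProbabilityMeasure P]
    {F : Filtration ℝ mΩ} {b : ℝ → Ω → ℝ} (hb : MemL2 P F b) {u : ℝ} (hu : 0 < u)
    {ε : ℝ≥0∞} (hε : 0 < ε) (hε' : ε ≠ ∞) :
    ∃ c n t, IsSimpleWith F c n t ∧ t n ≤ u ∧ MemH2 P F c ∧
      P {ω | ε ≤ ∫⁻ s in Ioc 0 u, ENNReal.ofReal ((b s ω - c s ω) ^ 2)} ≤ ε := by
  have hmeas : ∀ {f g : ℝ → Ω → ℝ}, Measurable (Function.uncurry f) →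
      Measurable (Function.uncurry g) → Measurable fun ω =>
        ∫⁻ s in Ioc 0 u, ENNReal.ofReal ((f s ω - g s ω) ^ 2) := by
    intro f g hf hg
    refine Measurable.lintegral_prod_right'
      (f := fun p : Ω × ℝ => ENNReal.ofReal ((f p.2 p.1 - g p.2 p.1) ^ 2)) ?_
    have h1 : Measurable fun p : Ω × ℝ => f p.2 p.1 :=
      hf.comp (measurable_snd.prodMk measurable_fst)
    have h2 : Measurable fun p : Ω × ℝ => g p.2 p.1 :=
      hg.comp (measurable_snd.prodMk measurable_fst)
    exact ((h1.sub h2).pow_const 2).ennreal_ofReal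
  have hε4 : 0 < ε / 4 := ENNReal.div_pos hε.ne' (by simp)
  have hε4' : ε / 4 ≠ ∞ := ENNReal.div_ne_top hε' (by simp)
  have hε2 : 0 < ε / 2 := ENNReal.div_pos hε.ne' (by simp)
  -- capping the truncation error at `ε / 4` turns almost sure convergence into convergence of means
  have hms : ∀ N : ℕ, Measurable fun ω =>
      ∫⁻ s in Ioc 0 u, ENNReal.ofReal ((b s ω - clampProc b u N s ω) ^ 2) := fun N => by
    have h := hmeas hb.1 (measurable_clampProc hb.1 u N)
    exact h
  have htrunc : Tendsto (fun N : ℕ => ∫⁻ ω, min (ε / 4)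
      (∫⁻ s in Ioc 0 u, ENNReal.ofReal ((b s ω - clampProc b u N s ω) ^ 2)) ∂P) atTop (𝓝 0) := by
    have key := tendsto_lintegral_filter_of_dominated_convergence (μ := P) (l := atTop)
      (F := fun (N : ℕ) ω => min (ε / 4)
        (∫⁻ s in Ioc 0 u, ENNReal.ofReal ((b s ω - clampProc b u N s ω) ^ 2)))
      (f := fun _ => 0) (fun _ => ε / 4)
      (Eventually.of_forall fun N => measurable_const.min (hms N))
      (Eventually.of_forall fun N => ae_of_all _ fun ω => min_le_left _ _) (by simpa using hε4') ?_
    · simpa using key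
    · filter_upwards [hb.2.2 u hu.le] with ω hω
      have h := (tendsto_const_nhds (x := ε / 4)).min (tendsto_lintegral_sub_clampProc hb.1 hω)
      rw [min_eq_right zero_le] at h
      exact h
  have hprod : 0 < ε / 2 * (ε / 4) := ENNReal.mul_pos hε2.ne' hε4.ne'
  obtain ⟨N, hEN⟩ := ((ENNReal.tendsto_nhds_zero.1 htrunc) _ hprod).exists
  have hN : P {ω | ε / 4 ≤ ∫⁻ s in Ioc 0 u,
      ENNReal.ofReal ((b s ω - clampProc b u N s ω) ^ 2)} ≤ ε / 2 := by
    have h := (meas_ge_le_lintegral_div (measurable_const.min (hms N)).aemeasurable hε4.ne'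
      hε4').trans (ENNReal.div_le_of_le_mul hEN)
    simpa only [le_min_iff, le_refl, true_and] using h
  set B := clampProc b u N with hB_def
  have hBm : Measurable (Function.uncurry B) := measurable_clampProc hb.1 u N
  obtain ⟨c, n, t, hc, htn, hcH, hle⟩ := exists_simple_approx_of_bounded P hBm
    (adapted_clampProc hb.2.1 u N) hu (abs_clampProc_le b u N)
    (fun s ω hs => indicator_of_notMem hs _)
    hprod
  refine ⟨c, n, t, hc, htn, hcH, ?_⟩
  have hmarkov : P {ω | ε / 4 ≤ ∫⁻ s in Ioc 0 u, ENNReal.ofReal ((B s ω - c s ω) ^ 2)} ≤ ε / 2 :=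
    (meas_ge_le_lintegral_div (hmeas hBm hcH.1).aemeasurable hε4.ne' hε4').trans
      (ENNReal.div_le_of_le_mul hle)
  calc P {ω | ε ≤ ∫⁻ s in Ioc 0 u, ENNReal.ofReal ((b s ω - c s ω) ^ 2)}
      ≤ P ({ω | ε / 4 ≤ ∫⁻ s in Ioc 0 u, ENNReal.ofReal ((b s ω - B s ω) ^ 2)} ∪
          {ω | ε / 4 ≤ ∫⁻ s in Ioc 0 u, ENNReal.ofReal ((B s ω - c s ω) ^ 2)}) := by
        refine measure_mono fun ω hω => ?_
        by_contra hcon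
        simp only [mem_union, mem_ofPred_eq, not_or, not_le] at hcon hω
        have h1 : Measurable fun s => b s ω := hb.1.comp measurable_prodMk_right
        have h2 : Measurable fun s => B s ω := hBm.comp measurable_prodMk_right
        have h3 : Measurable fun s => c s ω := hcH.1.comp measurable_prodMk_right
        have hsum : ∫⁻ s in Ioc 0 u, ENNReal.ofReal ((b s ω - c s ω) ^ 2) ≤
            2 * (∫⁻ s in Ioc 0 u, ENNReal.ofReal ((b s ω - B s ω) ^ 2)) +
              2 * ∫⁻ s in Ioc 0 u, ENNReal.ofReal ((B s ω - c s ω) ^ 2) := by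
          rw [← lintegral_const_mul _ (by fun_prop), ← lintegral_const_mul _ (by fun_prop),
            ← lintegral_add_left (by fun_prop)]
          exact lintegral_mono fun s => ofReal_sub_sq_le _ _ _
        refine absurd (hω.trans hsum) (not_le.2 ?_)
        have hq : 2 * (ε / 4) + 2 * (ε / 4) = ε := by
          rw [← add_mul, ← mul_div_assoc, mul_comm, show (2 : ℝ≥0∞) + 2 = 4 by norm_num]
          exact ENNReal.mul_div_cancel_right (by simp) (by simp)
        calc _ < 2 * (ε / 4) + 2 * (ε / 4) := by
              refine ENNReal.add_lt_add ?_ ?_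
              · exact (ENNReal.mul_lt_mul_iff_right (by simp) (by simp)).2 hcon.1
              · exact (ENNReal.mul_lt_mul_iff_right (by simp) (by simp)).2 hcon.2
          _ = ε := hq
    _ ≤ ε / 2 + ε / 2 := (measure_union_le _ _).trans (add_le_add hN hmarkov)
    _ = ε := ENNReal.add_halves ε

/-! ### Uniqueness -/

/-- Uniqueness at each time: two stochastic integral mappings agree a.s. at each
time `t ≥ 0` on each `b ∈ L²`. -/
theorem stochasticIntegralMap_ae_eq
    (P : Measure Ω) [IsProbabilityMeasure P] [P.IsComplete]
    (F : Filtration ℝ mΩ) (hF : AugmentedFiltration P F)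
    (W : ℝ → Ω → ℝ) (hW : IsWienerProcess P F W)
    (I J : (ℝ → Ω → ℝ) → ℝ → Ω → ℝ)
    (hI : IsStochasticIntegralMap P F W I) (hJ : IsStochasticIntegralMap P F W J) :
    ∀ b, MemL2 P F b → ∀ u : ℝ, 0 ≤ u → ∀ᵐ ω ∂P, I b u ω = J b u ω := by
  intro b hb u hu
  have happrox : ∀ k : ℕ, ∃ c n t, IsSimpleWith F c n t ∧ t n ≤ u ∧ MemH2 P F c ∧
      P {ω | ((k : ℝ≥0∞) + 1)⁻¹ ≤ ∫⁻ s in Ioc 0 u, ENNReal.ofReal ((b s ω - c s ω) ^ 2)} ≤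
        ((k : ℝ≥0∞) + 1)⁻¹ := by
    intro k
    have hpos : (0 : ℝ≥0∞) < ((k : ℝ≥0∞) + 1)⁻¹ := by
      rw [ENNReal.inv_pos]; finiteness
    have htop : ((k : ℝ≥0∞) + 1)⁻¹ ≠ ∞ := by simp
    -- for `u = 0` the time integral is over the empty set and the zero process will do
    rcases hu.eq_or_lt with rfl | hu'
    · have ht : StrictMono fun i : ℕ => (i : ℝ) := Nat.strictMono_cast
      refine ⟨gridProc (fun _ _ => 0) 0 fun i : ℕ => (i : ℝ), 0, fun i : ℕ => (i : ℝ),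
        gridProc_isSimpleWith (fun _ => measurable_const) 0 ht (by simp), by simp,
        gridProc_memH2 P (C := 0) (fun _ => measurable_const) (by simp) 0 ht, ?_⟩
      simp
    · exact exists_simple_approx P hb hu' hpos htop
  choose c n t hc htn hcH hP using happrox
  have hconv : TendstoInMeasure P
      (fun k ω => ∫ s in Set.Ioc (0 : ℝ) u, (b s ω - c k s ω) ^ 2) atTop (fun _ => (0 : ℝ)) := by
    intro ε hε
    have hinv : Tendsto (fun k : ℕ => ((k : ℝ≥0∞) + 1)⁻¹) atTop (𝓝 0) := by
      have := (tendsto_add_atTop_iff_nat 1).2 ENNReal.tendsto_inv_nat_nhds_zero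
      simpa using this
    refine tendsto_of_tendsto_of_tendsto_of_le_of_le' tendsto_const_nhds hinv
      (Eventually.of_forall fun _ => zero_le) ?_
    filter_upwards [(ENNReal.tendsto_nhds_zero.1 hinv) ε hε] with k hk
    refine (measure_mono fun ω hω => ?_).trans (hP k)
    refine hk.trans (le_trans hω ?_)
    rw [edist_zero_right]
    refine (enorm_integral_le_lintegral_enorm _).trans (le_of_eq ?_)
    exact lintegral_congr fun s => Real.enorm_of_nonneg (sq_nonneg _)
  have hsimple : ∀ k, IsSimpleProcess F (c k) ∧ MemH2 P F (c k) := fun k =>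
    ⟨⟨n k, t k, hc k⟩, hcH k⟩
  have hIJ : ∀ k, (fun ω => I (c k) u ω) =ᵐ[P] fun ω => J (c k) u ω := fun k => by
    filter_upwards [hI.2.1 (c k) (n k) (t k) (hcH k).memL2 (hc k) u (htn k),
      hJ.2.1 (c k) (n k) (t k) (hcH k).memL2 (hc k) u (htn k)] with ω h1 h2
    rw [h1, h2]
  exact tendstoInMeasure_ae_unique
    ((hI.2.2 u hu b hb c hsimple hconv).congr_left hIJ) (hJ.2.2 u hu b hb c hsimple hconv)
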